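/- arXiv:1908.03604 — 3 statements merged into one kernel-verified Lean document; each statement's English description precedes it below -/
import Mathlib

section
/- Let N ≥ 1 be a natural number, let c : ℤ → ℂ be N-periodic (c(n+N) = c(n) for all n ∈ ℤ), and let α ∈ ℂ∖ℤ. Then the symmetric partial sums ∑_{n=−M}^{M} sinc(α−n)·c(n) converge as M → ∞, and the limit equals (1/N)·∑_{n=0}^{N−1} sin(π(α−n))·cot(π(α−n)/N)·c(n) if N is even, and (1/N)·∑_{n=0}^{N−1} sin(π(α−n))·csc(π(α−n)/N)·c(n) if N is odd. -/
/-!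
Up to the factor `1 / π`, the `n`-th summand is `g n / (α - n)` with `g n = sin (π (α - n)) c n`,
and `g (n + N) = (-1) ^ N g n`. Splitting `n = r + N k` into residue classes therefore turns the
series into `N` rescaled copies of the Mittag-Leffler expansion of `π cot (π x)` when the multiplier
`(-1) ^ N` is `1`, and of `π / sin (π x)` when it is `-1`. Although the series converges only
conditionally, the splitting is legitimate: the summands tend to zero, so it suffices to follow the
symmetric partial sums along the multiples of `N`. The expansion of `π / sin (π x)` is itself the
case of the `2`-periodic sequence `(-1) ^ n`, for which the multiplier is `1`.
-/

open Filter Finset Topology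

/-- The normalized sinc function `sinc z = sin(πz)/(πz)`, with `sinc 0 = 1`. -/
noncomputable def csinc (z : ℂ) : ℂ :=
  if z = 0 then 1 else Complex.sin ((Real.pi : ℂ) * z) / ((Real.pi : ℂ) * z)

open SummationFilter Function

local notation "ℂ_ℤ" => Complex.integerComplement

section ResidueClasses

lemma sum_Ico_mul_eq_sum_residues {E : Type*} [AddCommMonoid E] (F : ℤ → E) (P : ℕ) (a b : ℤ) :
    ∑ n ∈ Ico (P * a) (P * b), F n = ∑ r ∈ range P, ∑ k ∈ Ico a b, F (r + P * k) := by
  rcases P.eq_zero_or_pos with rfl | hP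
  · simp
  have hP' : (0 : ℤ) < P := mod_cast hP
  rw [← sum_product']
  refine sum_nbij' (fun n ↦ ((n % P).toNat, n / P)) (fun x ↦ x.1 + P * x.2) ?_ ?_ ?_ ?_ ?_
  · intro n hn
    rw [mem_Ico] at hn
    have hn_lt := Int.emod_lt_of_pos n hP'
    have le_div : a ≤ n / P := (Int.le_ediv_iff_mul_le hP').2 (by linarith)
    have div_lt : n / P < b := (Int.ediv_lt_iff_lt_mul hP').2 (by linarith)
    simp only [mem_product, mem_range, mem_Ico]
    omega
  · rintro ⟨r, k⟩ hrk
    simp only [mem_product, mem_range, mem_Ico] at hrk ⊢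
    constructor <;> nlinarith
  · intro n _
    rw [Int.toNat_of_nonneg (Int.emod_nonneg n hP'.ne'), Int.emod_add_mul_ediv]
  · rintro ⟨r, k⟩ hrk
    simp only [mem_product, mem_range] at hrk
    have hr : (r : ℤ) < P := mod_cast hrk.1
    simp [Int.add_mul_ediv_left _ _ hP'.ne', Int.ediv_eq_zero_of_lt, Int.emod_eq_of_lt, hr]
  · intro n _
    rw [Int.toNat_of_nonneg (Int.emod_nonneg n hP'.ne'), Int.emod_add_mul_ediv]

variable {E : Type*} [AddCommGroup E] [TopologicalSpace E]

lemma tendsto_atTop_of_tendsto_mul_left [ContinuousAdd E] {u : ℕ → E} {L : E} {P : ℕ}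
    (hP : P ≠ 0) (hu : Tendsto (fun n ↦ u (n + 1) - u n) atTop (𝓝 0))
    (hL : Tendsto (fun k ↦ u (P * k)) atTop (𝓝 L)) : Tendsto u atTop (𝓝 L) := by
  have tendsto_mul_add (r : ℕ) : Tendsto (fun k ↦ u (P * k + r)) atTop (𝓝 L) := by
    induction r with
    | zero => exact hL
    | succ r ih =>
      have hmul : Tendsto (fun k ↦ P * k + r) atTop atTop :=
        tendsto_atTop_mono (fun k ↦ (Nat.le_mul_of_pos_left k hP.bot_lt).trans le_self_add)
          tendsto_id
      simpa [add_assoc] using (hu.comp hmul).add ih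
  refine tendsto_def.2 fun U hU ↦ ?_
  have eventually_mem : ∀ᶠ k in atTop, ∀ r ∈ range P, u (P * k + r) ∈ U :=
    (eventually_all_finset _).2 fun r _ ↦ tendsto_mul_add r hU
  filter_upwards [(Nat.tendsto_div_const_atTop hP).eventually eventually_mem] with M hM
  simpa [Nat.div_add_mod] using hM (M % P) (mem_range.2 (M.mod_lt hP.bot_lt))

lemma hasSum_symmetricIcc_of_residues [IsTopologicalAddGroup E] {F : ℤ → E} {P : ℕ} (hP : P ≠ 0)
    (hF : Tendsto F cofinite (𝓝 0)) {L : ℕ → E}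
    (hL : ∀ r ∈ range P, HasSum (fun k : ℤ ↦ F (r + P * k)) (L r) (symmetricIcc ℤ)) :
    HasSum F (∑ r ∈ range P, L r) (symmetricIcc ℤ) := by
  have hF_comp {f : ℕ → ℤ} (hf : Injective f) : Tendsto (F ∘ f) atTop (𝓝 0) :=
    Nat.cofinite_eq_atTop ▸ hF.comp hf.tendsto_cofinite
  rw [hasSum_symmetricIcc_iff]
  refine tendsto_atTop_of_tendsto_mul_left hP ?_ ?_
  · have endpoints := (hF_comp (f := fun n ↦ n + 1) fun m n h ↦ by simpa using h).add
      (hF_comp (f := fun n ↦ -(n + 1)) fun m n h ↦ by simpa using h)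
    simpa only [Nat.cast_add_one, sum_Icc_succ_eq_add_endpoints, add_sub_cancel_right, add_zero,
      comp_apply] using endpoints
  · have hIco (r : ℕ) (hr : r ∈ range P) :
        Tendsto (fun K : ℕ ↦ ∑ k ∈ Ico (-(K : ℤ)) K, F (r + P * k)) atTop (𝓝 (L r)) := by
      have last_term : Tendsto (fun K : ℕ ↦ -F (r + P * K)) atTop (𝓝 0) := by
        simpa using (hF_comp (f := fun K ↦ r + P * K) fun m n h ↦ by simpa [hP] using h).neg
      exact hasSum_symmetricIco_int_iff.1
        ((hL r hr).hasSum_symmetricIco_of_hasSum_symmetricIcc last_term)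
    have last_term := hF_comp (f := fun K ↦ P * K) fun m n h ↦ by simpa [hP] using h
    have partial_sums := (tendsto_finsetSum _ hIco).add last_term
    rw [add_zero] at partial_sums
    refine partial_sums.congr fun K ↦ ?_
    have hle : (P : ℤ) * -K ≤ P * K := by nlinarith
    simp only [Nat.cast_mul, ← mul_neg, sum_Icc_eq_sum_Ico_add F hle,
      sum_Ico_mul_eq_sum_residues, comp_apply]

end ResidueClasses

section Multiplier

lemma sub_natCast_div_mem_integerComplement {α : ℂ} (hα : α ∈ ℂ_ℤ) {N : ℕ} (hN : N ≠ 0) (r : ℕ) :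
    (α - r) / N ∈ ℂ_ℤ := by
  rintro ⟨m, hm⟩
  refine hα ⟨m * N + r, ?_⟩
  rw [eq_div_iff (Nat.cast_ne_zero.2 hN)] at hm
  push_cast
  rw [hm, sub_add_cancel]

lemma tendsto_div_sub_intCast_cofinite {g : ℤ → ℂ} (hg : BddAbove (Set.range (‖g ·‖))) (α : ℂ) :
    Tendsto (fun n : ℤ ↦ g n / (α - n)) cofinite (𝓝 0) := by
  have norm_intCast : Tendsto (fun n : ℤ ↦ ‖(n : ℂ)‖) cofinite atTop := by
    simpa only [Complex.norm_intCast, comp_def, Real.norm_eq_abs] using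
      tendsto_norm_comp_cofinite_atTop_of_isClosedEmbedding Int.isClosedEmbedding_coe_real
  have sub_intCast : Tendsto (fun n : ℤ ↦ α - n) cofinite (Bornology.cobounded ℂ) :=
    (tendsto_const_sub_cobounded α).comp (tendsto_norm_atTop_iff_cobounded.1 norm_intCast)
  exact isBoundedUnder_le_mul_tendsto_zero hg.isBoundedUnder_of_range
    (tendsto_inv₀_cobounded.comp sub_intCast)

lemma apply_add_mul_of_multiplier {G : Type*} [GroupWithZero G] {g : ℤ → G} {ε : G} {p : ℤ}
    (hε : ε ≠ 0) (hg : ∀ n, g (n + p) = ε * g n) (n k : ℤ) : g (n + p * k) = ε ^ k * g n := by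
  induction k using Int.induction_on with
  | zero => simp
  | succ k ih => rw [mul_add_one, ← add_assoc, hg, ih, ← mul_assoc, zpow_add_one₀ hε,
      (Commute.self_zpow₀ ε k).eq]
  | pred k ih =>
    refine mul_left_cancel₀ hε ?_
    rw [← hg, ← mul_assoc, ← zpow_one_add₀ hε, add_sub_cancel, ← ih, add_assoc, mul_sub_one,
      sub_add_cancel]

lemma bddAbove_range_norm_of_multiplier {𝕜 : Type*} [NormedDivisionRing 𝕜] {g : ℤ → 𝕜} {ε : 𝕜}
    {p : ℤ} (hp : 0 < p) (hε : ‖ε‖ = 1) (hg : ∀ n, g (n + p) = ε * g n) :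
    BddAbove (Set.range (‖g ·‖)) := by
  have norm_periodic : Periodic (‖g ·‖) p := fun n ↦ by simp [hg, hε]
  rw [← norm_periodic.image_Ioc hp 0]
  exact ((Set.finite_Ioc _ _).image _).bddAbove

theorem hasSum_div_sub_of_multiplier {N : ℕ} (hN : N ≠ 0) {g : ℤ → ℂ} {ε : ℂ} (hε : ‖ε‖ = 1)
    (hg : ∀ n, g (n + N) = ε * g n) {φ : ℂ → ℂ}
    (hφ : ∀ x ∈ ℂ_ℤ, HasSum (fun k : ℤ ↦ ε ^ k / (x - k)) (φ x) (symmetricIcc ℤ))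
    {α : ℂ} (hα : α ∈ ℂ_ℤ) :
    HasSum (fun n : ℤ ↦ g n / (α - n)) (∑ r ∈ range N, g r / N * φ ((α - r) / N))
      (symmetricIcc ℤ) := by
  have hN' : (N : ℂ) ≠ 0 := Nat.cast_ne_zero.2 hN
  have hε' : ε ≠ 0 := norm_ne_zero_iff.1 (by simp [hε])
  have hg_bdd := bddAbove_range_norm_of_multiplier (mod_cast hN.bot_lt) hε hg
  refine hasSum_symmetricIcc_of_residues hN (tendsto_div_sub_intCast_cofinite hg_bdd α)
    fun r _ ↦ ?_
  refine ((hφ _ (sub_natCast_div_mem_integerComplement hα hN r)).mul_left (g r / N)).congr_fun ?_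
  intro k
  have rescale : α - ((r + N * k : ℤ) : ℂ) = N * ((α - r) / N - k) := by
    push_cast
    field_simp
    ring
  rw [apply_add_mul_of_multiplier hε' hg, rescale, mul_comm (ε ^ k), mul_div_mul_comm]

end Multiplier

section MittagLeffler

lemma sum_Icc_one_div_sub (x : ℂ) (M : ℕ) :
    ∑ k ∈ Icc (-(M : ℤ)) M, 1 / (x - k) = 1 / x + ∑ j ∈ range M, cotTerm x j := by
  induction M with
  | zero => simp
  | succ M ih =>
    push_cast
    rw [sum_Icc_succ_eq_add_endpoints, ih, sum_range_succ]
    push_cast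
    ring

theorem hasSum_one_div_sub_intCast {x : ℂ} (hx : x ∈ ℂ_ℤ) :
    HasSum (fun k : ℤ ↦ 1 / (x - k)) (Real.pi * Complex.cot (Real.pi * x)) (symmetricIcc ℤ) := by
  simpa only [hasSum_symmetricIcc_iff, sum_Icc_one_div_sub, add_sub_cancel] using
    (tendsto_logDeriv_euler_cot_sub hx).const_add (1 / x)

lemma cot_sub_cot_sub_pi_div_two (z : ℂ) :
    Complex.cot z - Complex.cot (z - Real.pi / 2) = 2 * (Complex.sin (2 * z))⁻¹ := by
  rw [Complex.cot, Complex.cot, Complex.sin_sub_pi_div_two, Complex.cos_sub_pi_div_two,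
    Complex.sin_two_mul]
  by_cases hsin : Complex.sin z = 0
  · simp [hsin]
  by_cases hcos : Complex.cos z = 0
  · simp [hcos]
  field_simp
  linear_combination Complex.cos_sq_add_sin_sq z

theorem hasSum_neg_one_zpow_div_sub_intCast {x : ℂ} (hx : x ∈ ℂ_ℤ) :
    HasSum (fun k : ℤ ↦ (-1) ^ k / (x - k)) (Real.pi * (Complex.sin (Real.pi * x))⁻¹)
      (symmetricIcc ℤ) := by
  have period_two (n : ℤ) : (-1 : ℂ) ^ (n + (2 : ℕ)) = 1 * (-1) ^ n := by
    simp [zpow_add₀]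
  convert! hasSum_div_sub_of_multiplier two_ne_zero norm_one period_two
    (fun y hy ↦ by simpa using hasSum_one_div_sub_intCast hy) hx using 1
  have hcsc := cot_sub_cot_sub_pi_div_two (Real.pi * x / 2)
  have even_arg : (Real.pi : ℂ) * ((x - (0 : ℕ)) / (2 : ℕ)) = Real.pi * x / 2 := by
    push_cast
    ring
  have odd_arg : (Real.pi : ℂ) * ((x - (1 : ℕ)) / (2 : ℕ)) = Real.pi * x / 2 - Real.pi / 2 := by
    push_cast
    ring
  rw [mul_div_cancel₀ _ two_ne_zero] at hcsc
  rw [sum_range_succ, sum_range_one, even_arg, odd_arg]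
  push_cast
  linear_combination -(Real.pi / 2 : ℂ) * hcsc

end MittagLeffler

section Shannon

theorem hasSum_csinc_mul_of_periodic {N : ℕ} (hN : N ≠ 0) {c : ℤ → ℂ} (hc : Periodic c (N : ℤ))
    {φ : ℂ → ℂ} (hφ : ∀ x ∈ ℂ_ℤ, HasSum (fun k : ℤ ↦ ((-1) ^ N) ^ k / (x - k))
      (Real.pi * φ (Real.pi * x)) (symmetricIcc ℤ)) {α : ℂ} (hα : α ∈ ℂ_ℤ) :
    HasSum (fun n : ℤ ↦ csinc (α - n) * c n)
      (1 / N * ∑ n ∈ range N, Complex.sin (Real.pi * (α - n)) * φ (Real.pi * (α - n) / N) * c n)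
      (symmetricIcc ℤ) := by
  have hpi : (Real.pi : ℂ) ≠ 0 := Complex.ofReal_ne_zero.2 Real.pi_ne_zero
  have multiplier (n : ℤ) : Complex.sin (Real.pi * (α - (n + N : ℤ))) * c (n + N) =
      (-1) ^ N * (Complex.sin (Real.pi * (α - n)) * c n) := by
    have shift : (Real.pi : ℂ) * (α - (n + N : ℤ)) = Real.pi * (α - n) - N * Real.pi := by
      push_cast
      ring
    rw [hc, shift, Complex.sin_antiperiodic.sub_nat_mul_eq, mul_assoc]
  have hasSum_div := (hasSum_div_sub_of_multiplier
    (g := fun n ↦ Complex.sin (Real.pi * (α - n)) * c n) hN (by simp) multiplier hφ hα).mul_left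
    (1 / (Real.pi : ℂ))
  convert! hasSum_div using 1
  · ext n
    have hn : α - n ≠ 0 := sub_ne_zero.2 fun h ↦ hα ⟨n, h.symm⟩
    rw [csinc, if_neg hn]
    field_simp
  · simp only [mul_sum]
    refine sum_congr rfl fun n _ ↦ ?_
    rw [mul_div_assoc]
    push_cast
    field_simp

end Shannon

/-- Shannon interpolation of an `N`-periodic sequence: for `α ∈ ℂ ∖ ℤ`, the symmetric
partial sums `∑_{n=-M}^{M} sinc(α-n) c(n)` converge, with limit
`(1/N) ∑_{n=0}^{N-1} sin(π(α-n)) cot(π(α-n)/N) c(n)` if `N` is even, and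
`(1/N) ∑_{n=0}^{N-1} sin(π(α-n)) csc(π(α-n)/N) c(n)` if `N` is odd. -/
theorem shannon_series_periodic (N : ℕ) (hN : 1 ≤ N) (c : ℤ → ℂ)
    (hc : ∀ n : ℤ, c (n + N) = c n) (α : ℂ) (hα : ∀ m : ℤ, α ≠ (m : ℂ)) :
    Tendsto (fun M : ℕ => ∑ n ∈ Finset.Icc (-(M : ℤ)) (M : ℤ),
        csinc (α - (n : ℂ)) * c n)
      atTop (𝓝 (if Even N then
          (1 / (N : ℂ)) * ∑ n ∈ Finset.range N,
            Complex.sin ((Real.pi : ℂ) * (α - n)) *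
              Complex.cot ((Real.pi : ℂ) * (α - n) / N) * c n
        else
          (1 / (N : ℂ)) * ∑ n ∈ Finset.range N,
            Complex.sin ((Real.pi : ℂ) * (α - n)) *
              (Complex.sin ((Real.pi : ℂ) * (α - n) / N))⁻¹ * c n)) := by
  have hα' : α ∈ ℂ_ℤ := fun ⟨m, hm⟩ ↦ hα m hm.symm
  have hN' : N ≠ 0 := Nat.one_le_iff_ne_zero.1 hN
  rw [← hasSum_symmetricIcc_iff]
  split_ifs with hN_even
  · exact hasSum_csinc_mul_of_periodic (φ := Complex.cot) hN' hc
      (fun x hx ↦ by simpa [hN_even.neg_one_pow] using hasSum_one_div_sub_intCast hx) hα'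
  · have hN_odd : Odd N := Nat.not_even_iff_odd.1 hN_even
    exact hasSum_csinc_mul_of_periodic (φ := fun z ↦ (Complex.sin z)⁻¹) hN' hc
      (fun x hx ↦ by simpa [hN_odd.neg_one_pow] using hasSum_neg_one_zpow_div_sub_intCast hx) hα'
end

section
/- For every α ∈ ℂ∖ℤ and every x ∈ ℂ, the symmetric partial sums ∑_{n=−M}^{M} sinc(α−n)·sin(x + πn/2) converge as M → ∞ and their limit equals sin(x + πα/2). (This expresses that the fractional derivative of sine, obtained by Shannon interpolation of its integer-order derivatives sin(x + πn/2), is sin(x + πα/2).) -/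
open Filter Finset Topology

/-!
For `θ ∈ (-π, π)` the numbers `sinc(α - n)` are the Fourier coefficients on `[-π, π]` of
`t ↦ exp(iαt)`, which is differentiable at `θ`, so its Fourier series converges symmetrically to
its value there: `∑ sinc(α - n) exp(iθn) = exp(iθα)`. Combining the points `θ` and `-θ` turns
exponentials into sines, and `θ = π/2` is the case of Shannon interpolation of derivatives.

Pointwise convergence at `x` follows Chernoff: writing `f t - f x = (e t - e x) g t` with `e` the
first Fourier monomial and `g` integrable, the Fourier series of `f - f x` at `x` telescopes and
its boundary terms vanish by the Riemann–Lebesgue lemma.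
-/

section PointwiseConvergence

open AddCircle Asymptotics MeasureTheory SummationFilter

theorem hasSum_sub_add_one_symmetricIcc_of_tendsto_zero {G : Type*} [AddCommGroup G]
    [TopologicalSpace G] [IsTopologicalAddGroup G] {a : ℤ → G} (ha : Tendsto a cofinite (𝓝 0)) :
    HasSum (fun n ↦ a n - a (n + 1)) 0 (symmetricIcc ℤ) := by
  rw [Int.cofinite_eq, tendsto_sup] at ha
  have hbot : Tendsto (fun N : ℕ ↦ a (-N)) atTop (𝓝 0) :=
    ha.1.comp (tendsto_neg_atTop_atBot.comp tendsto_natCast_atTop_atTop)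
  have htop : Tendsto (fun N : ℕ ↦ a (N + 1)) atTop (𝓝 0) :=
    ha.2.comp (tendsto_atTop_add_const_right _ _ tendsto_natCast_atTop_atTop)
  refine hasSum_symmetricIcc_iff.mpr ?_
  have htelescope (N : ℕ) : ∑ n ∈ Icc (-N : ℤ) N, (a n - a (n + 1)) = a (-N) - a (N + 1) := by
    rw [sum_Icc_eq_sum_Ico_add _ (by lia), sum_Ico_int_sub, sub_add_sub_cancel]
  simpa [htelescope] using hbot.sub htop

variable {T : ℝ} [hT : Fact (0 < T)] {E : Type*} [NormedAddCommGroup E]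

theorem fourier_one_injective : Function.Injective (fourier 1 : AddCircle T → ℂ) := by
  intro s t hst
  rw [fourier_one, fourier_one] at hst
  exact injective_toCircle hT.out.ne' (Circle.coe_injective hst)

theorem isBigO_sub_fourier_one_sub (x : ℝ) :
    (· - x) =O[𝓝 x] fun t ↦ (fourier 1 (t : AddCircle T) - fourier 1 (x : AddCircle T) : ℂ) := by
  have hderiv : 2 * Real.pi * Complex.I * (1 : ℤ) / T * fourier 1 (x : AddCircle T) ≠ 0 := by
    simp [hT.out.ne', Real.pi_ne_zero, -fourier_apply, fourier_one]
  simpa only [prod_pure, isBigO_map, Function.comp_def]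
    using (HasDerivAtFilter.isTheta_sub (hasDerivAt_fourier T 1 x) hderiv).isBigO_symm

theorem integrable_liftIoc {a : ℝ} {f : ℝ → E} (hf : IntegrableOn f (Set.Ioc a (a + T))) :
    Integrable (liftIoc T a f) haarAddCircle := by
  have hvol : Integrable (liftIoc T a f) :=
    ((measurePreserving_subtype_coe measurableSet_Ioc).comp
      (measurePreserving_equivIoc T)).integrable_comp_of_integrable hf
  rwa [volume_eq_smul_haarAddCircle, integrable_smul_measure (by simpa using hT.out)
    ENNReal.ofReal_ne_top] at hvol

variable [NormedSpace ℂ E]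

theorem tendsto_fourierCoeff_cofinite (f : AddCircle T → E) :
    Tendsto (fourierCoeff f) cofinite (𝓝 0) := by
  have hRL := Real.tendsto_integral_exp_smul_cocompact
    ((Set.Ioc 0 (0 + T)).indicator fun t : ℝ ↦ f t)
  have hscale : Tendsto (fun n : ℤ ↦ (n : ℝ) / T) cofinite (cocompact ℝ) :=
    (Homeomorph.mulRight₀ T⁻¹ (inv_ne_zero hT.out.ne')).isClosedEmbedding.tendsto_cocompact.comp
      Int.tendsto_coe_cofinite
  have hcoeff (n : ℤ) : fourierCoeff f n = (1 / T) • ∫ t : ℝ,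
      Real.fourierChar (-(t * (n / T))) • (Set.Ioc 0 (0 + T)).indicator (fun t : ℝ ↦ f t) t := by
    rw [fourierCoeff_eq_intervalIntegral f n 0,
      intervalIntegral.integral_of_le (by simp [hT.out.le]),
      ← integral_indicator measurableSet_Ioc]
    refine congrArg _ (integral_congr_ae (.of_forall fun t ↦ ?_))
    have hexp : fourier (-n) (t : AddCircle T) = Real.fourierChar (-(t * (n / T))) := by
      rw [fourier_coe_apply, Real.fourierChar_apply]
      congr 1
      push_cast
      ring
    simp only [Set.indicator_apply, hexp, Circle.smul_def, smul_ite, smul_zero]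
  simpa only [funext hcoeff, smul_zero, Function.comp_def]
    using (hRL.comp hscale).const_smul (1 / T)

theorem fourierCoeff_fourier_smul (f : AddCircle T → E) (m n : ℤ) :
    fourierCoeff (fun t ↦ fourier m t • f t) n = fourierCoeff f (n - m) := by
  simp_rw [fourierCoeff, smul_smul, ← fourier_add, neg_sub', sub_neg_eq_add]

theorem fourierCoeff_const [CompleteSpace E] (c : E) (n : ℤ) :
    fourierCoeff (fun _ : AddCircle T ↦ c) n = Pi.single (M := fun _ ↦ E) 0 c n := by
  have hsmul : fourierCoeff (fun _ : AddCircle T ↦ c) n =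
      fourierCoeff (fourier 0 : AddCircle T → ℂ) n • c := by
    simp [fourierCoeff, integral_smul_const]
  rw [hsmul, fourierCoeff_fourier]
  obtain rfl | hn := eq_or_ne n 0 <;> simp [*]

theorem hasSum_fourier_smul_fourierCoeff_sub_smul {g : AddCircle T → E}
    (hg : Integrable g haarAddCircle) (x : AddCircle T) :
    HasSum (fun n ↦ fourier n x • fourierCoeff (fun t ↦ (fourier 1 t - fourier 1 x) • g t) n) 0
      (symmetricIcc ℤ) := by
  have hcoeff (n : ℤ) : fourierCoeff (fun t ↦ (fourier 1 t - fourier 1 x) • g t) n =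
      fourierCoeff g (n - 1) - fourier 1 x • fourierCoeff g n := by
    rw [← fourierCoeff_fourier_smul, ← fourierCoeff.const_smul]
    simp_rw [fourierCoeff, ← integral_sub ((hg.fourier_smul 1).fourier_smul _)
      ((hg.smul (fourier 1 x)).fourier_smul _), Pi.smul_apply, sub_smul, smul_sub]
  have hzero : Tendsto (fun n ↦ fourier n x • fourierCoeff g (n - 1)) cofinite (𝓝 0) := by
    rw [tendsto_zero_iff_norm_tendsto_zero]
    simpa only [norm_smul, fourier_apply, Circle.norm_coe, one_mul, norm_zero, Function.comp_def]
      using ((tendsto_fourierCoeff_cofinite g).comp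
        (sub_left_injective (b := (1 : ℤ))).tendsto_cofinite).norm
  convert! hasSum_sub_add_one_symmetricIcc_of_tendsto_zero hzero using 2 with n
  rw [hcoeff, smul_sub, smul_smul, ← fourier_add, add_sub_cancel_right]

/-- The slope of `f` between `x` and `t` measured against the first Fourier monomial instead of the
coordinate; it takes the value `0` at `t = x`. Its integrability is the Dini condition at `x`. -/
noncomputable def fourierSlope (f : AddCircle T → E) (x t : AddCircle T) : E :=
  (fourier 1 t - fourier 1 x)⁻¹ • (f t - f x)

theorem fourier_one_sub_smul_fourierSlope (f : AddCircle T → E) (x t : AddCircle T) :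
    (fourier 1 t - fourier 1 x) • fourierSlope f x t = f t - f x := by
  obtain rfl | htx := eq_or_ne t x
  · rw [sub_self, sub_self, zero_smul]
  · rw [fourierSlope, smul_inv_smul₀ (sub_ne_zero.mpr (fourier_one_injective.ne htx))]

theorem hasSum_fourier_smul_fourierCoeff_of_integrable_fourierSlope [CompleteSpace E]
    {f : AddCircle T → E} {x : AddCircle T} (hf : Integrable (fourierSlope f x) haarAddCircle) :
    HasSum (fun n ↦ fourier n x • fourierCoeff f n) (f x) (symmetricIcc ℤ) := by
  have hsplit :
      f = (fun t ↦ (fourier 1 t - fourier 1 x) • fourierSlope f x t) + fun _ ↦ f x := by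
    ext t
    rw [Pi.add_apply, fourier_one_sub_smul_fourierSlope, sub_add_cancel]
  have hconst := hasSum_single (L := symmetricIcc ℤ)
    (f := fun n ↦ fourier n x • fourierCoeff (fun _ : AddCircle T ↦ f x) n) 0
    fun n hn ↦ by simp [fourierCoeff_const, hn]
  have hdiff : Integrable (fun t ↦ (fourier 1 t - fourier 1 x) • fourierSlope f x t)
      haarAddCircle := by
    simp_rw [sub_smul]
    exact (hf.fourier_smul 1).sub (hf.smul (fourier 1 x))
  convert! (hasSum_fourier_smul_fourierCoeff_sub_smul hf x).add hconst using 2 with n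
  · rw [← smul_add]
    nth_rw 1 [hsplit]
    rw [fourierCoeff.add hdiff (integrable_const _), Pi.add_apply]
  · simp [fourierCoeff_const]

theorem integrable_fourierSlope_of_isBigO {f : AddCircle T → E} {x : AddCircle T}
    (hf : Integrable f haarAddCircle)
    (hx : (f · - f x) =O[𝓝 x] fun t ↦ (fourier 1 t - fourier 1 x : ℂ)) :
    Integrable (fourierSlope f x) haarAddCircle := by
  have hfx : Integrable (fun t ↦ f t - f x) haarAddCircle := hf.sub (integrable_const _)
  have hmeas : AEStronglyMeasurable (fourierSlope f x) haarAddCircle :=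
    AEStronglyMeasurable.smul (Measurable.aestronglyMeasurable (by fun_prop)) hfx.1
  refine integrableOn_univ.mp (LocallyIntegrable.integrableOn_isCompact (fun y ↦ ?_) isCompact_univ)
  obtain rfl | hyx := eq_or_ne y x
  · have hbdd : fourierSlope f y =O[𝓝 y] fun _ ↦ (1 : ℝ) := by
      refine (((isBigO_refl (fun t ↦ (fourier 1 t - fourier 1 y : ℂ)⁻¹) _).smul hx).trans
        (.of_bound 1 (.of_forall fun t ↦ ?_)))
      rw [smul_eq_mul, norm_mul, norm_inv, norm_one, one_mul]
      exact inv_mul_le_one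
    exact hbdd.integrableAtFilter hmeas.stronglyMeasurableAtFilter
      ((integrable_const _).integrableAtFilter _)
  · have hcont : ContinuousAt (fun t ↦ (fourier 1 t - fourier 1 x : ℂ)⁻¹) y :=
      ContinuousAt.inv₀ (by fun_prop) (sub_ne_zero.mpr (fourier_one_injective.ne hyx))
    have hbdd : fourierSlope f x =O[𝓝 y] fun t ↦ f t - f x := by
      simpa only [one_smul]
        using! (hcont.isBigO_one ℝ).smul (isBigO_refl (fun t ↦ f t - f x) (𝓝 y))
    exact hbdd.integrableAtFilter hmeas.stronglyMeasurableAtFilter (hfx.integrableAtFilter _)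

theorem hasSum_fourier_smul_fourierCoeffOn_of_differentiableAt [CompleteSpace E] {a b x : ℝ}
    {f : ℝ → E} (hab : a < b) (hf : IntervalIntegrable f volume a b) (hx : x ∈ Set.Ioo a b)
    (hfx : DifferentiableAt ℝ f x) :
    HasSum (fun n ↦ fourier n (x : AddCircle (b - a)) • fourierCoeffOn hab f n) (f x)
      (symmetricIcc ℤ) := by
  have : Fact (0 < b - a) := ⟨sub_pos.mpr hab⟩
  have hlift {t : ℝ} (ht : t ∈ Set.Ioo a b) : liftIoc (b - a) a f t = f t :=
    liftIoc_coe_apply (by rw [add_sub_cancel]; exact Set.Ioo_subset_Ioc_self ht)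
  rw [← hlift hx]
  refine hasSum_fourier_smul_fourierCoeff_of_integrable_fourierSlope
    (integrable_fourierSlope_of_isBigO (integrable_liftIoc ?_) ?_)
  · rwa [add_sub_cancel, ← intervalIntegrable_iff_integrableOn_Ioc_of_le hab.le]
  rw [← QuotientAddGroup.isOpenQuotientMap_mk.map_nhds_eq, isBigO_map]
  refine (hfx.isBigO_sub.trans (isBigO_sub_fourier_one_sub x)).congr' ?_ .rfl
  filter_upwards [Ioo_mem_nhds hx.1 hx.2] with t ht
  exact congr_arg₂ _ (hlift ht).symm (hlift hx).symm

end PointwiseConvergence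

section ShannonInterpolation

open Complex MeasureTheory SummationFilter
open scoped Real

theorem integral_exp_mul_I_eq_csinc (z : ℂ) : ∫ t in -π..π, exp (z * t * I) = 2 * π * csinc z := by
  obtain rfl | hz := eq_or_ne z 0
  · simp [csinc, two_mul]
  · have hzI : z * I ≠ 0 := mul_ne_zero hz I_ne_zero
    simp_rw [mul_right_comm z _ I]
    rw [integral_exp_mul_complex hzI, csinc, if_neg hz, Complex.sin]
    push_cast
    field_simp
    rw [I_sq]
    ring_nf

theorem fourierCoeffOn_exp_mul_I (α : ℂ) (n : ℤ) :
    fourierCoeffOn (neg_lt_self Real.pi_pos) (fun t ↦ exp (α * t * I)) n = csinc (α - n) := by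
  have hexp (t : ℝ) : fourier (-n) (t : AddCircle (π - -π)) • exp (α * t * I) =
      exp ((α - n) * t * I) := by
    rw [fourier_coe_apply, smul_eq_mul, ← exp_add]
    congr 1
    push_cast
    field_simp
    ring
  simp_rw [fourierCoeffOn_eq_integral, hexp, integral_exp_mul_I_eq_csinc, real_smul]
  push_cast
  field_simp
  ring

theorem hasSum_csinc_mul_exp_mul_I (α : ℂ) {θ : ℝ} (hθ : θ ∈ Set.Ioo (-π) π) :
    HasSum (fun n : ℤ ↦ csinc (α - n) * exp (θ * n * I)) (exp (θ * α * I)) (symmetricIcc ℤ) := by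
  have hdiff : Differentiable ℝ fun t : ℝ ↦ exp (α * t * I) := by fun_prop
  convert! hasSum_fourier_smul_fourierCoeffOn_of_differentiableAt (neg_lt_self Real.pi_pos)
    (hdiff.continuous.intervalIntegrable _ _) hθ (hdiff θ) using 2 with n
  · rw [fourierCoeffOn_exp_mul_I, fourier_coe_apply, smul_eq_mul, mul_comm]
    congr 2
    push_cast
    field_simp
    ring
  · rw [mul_comm α]

theorem shannon_frac_deriv_sin_general (α x : ℂ) {θ : ℝ} (hθ : θ ∈ Set.Ioo (-π) π) :
    HasSum (fun n : ℤ ↦ csinc (α - n) * sin (x + θ * n)) (sin (x + θ * α)) (symmetricIcc ℤ) := by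
  have hsin (w : ℂ) : sin (x + θ * w) =
      I / 2 * (exp (-x * I) * exp ((-θ : ℝ) * w * I) - exp (x * I) * exp (θ * w * I)) := by
    rw [Complex.sin, ← exp_add, ← exp_add]
    push_cast
    ring_nf
  have hneg := hasSum_csinc_mul_exp_mul_I α (θ := -θ) ⟨by linarith [hθ.2], by linarith [hθ.1]⟩
  have hpos := hasSum_csinc_mul_exp_mul_I α hθ
  rw [hsin]
  convert! ((hneg.mul_left (exp (-x * I))).sub (hpos.mul_left (exp (x * I)))).mul_left (I / 2)
    using 2 with n
  rw [hsin]
  ring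

end ShannonInterpolation

/-- Shannon interpolation of the integer-order derivatives of sine: for `α ∈ ℂ ∖ ℤ` and
`x ∈ ℂ`, the symmetric partial sums `∑_{n=-M}^{M} sinc(α-n) sin(x + πn/2)` converge to
`sin(x + πα/2)`. -/
theorem shannon_frac_deriv_sin (α : ℂ) (hα : ∀ m : ℤ, α ≠ (m : ℂ)) (x : ℂ) :
    Tendsto (fun M : ℕ => ∑ n ∈ Finset.Icc (-(M : ℤ)) (M : ℤ),
        csinc (α - (n : ℂ)) * Complex.sin (x + (Real.pi : ℂ) * (n : ℂ) / 2))
      atTop (𝓝 (Complex.sin (x + (Real.pi : ℂ) * α / 2))) := by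
  have hsum := shannon_frac_deriv_sin_general α x (θ := Real.pi / 2)
    ⟨by linarith [Real.pi_pos], by linarith [Real.pi_pos]⟩
  simpa [div_mul_eq_mul_div] using SummationFilter.hasSum_symmetricIcc_iff.mp hsum
end

section
/- Let ζ be the Riemann zeta function and let η(k) denote the Dirichlet eta values: η(k) = (1 − 2^{1−k})·ζ(k) for k ∈ ℕ, k ≠ 1, and η(1) = log 2 (so η(0) = 1/2). Then for every s ∈ ℂ with Re s > 0, s ≠ 1, and 2^{1−s} ≠ 1, the series ∑_{n=0}^∞ (∑_{k=0}^n P_k(n)·η(k))·P_n(s) converges and ζ(s) = (1 − 2^{1−s})^{−1} · ∑_{n=0}^∞ (∑_{k=0}^n P_k(n)·η(k))·P_n(s); that is, ζ(s) = ∑_n [∑_k P_k(n)·((1−2^{1−k})/(1−2^{1−s}))·ζ(k)]·P_n(s) with the k = 1 term interpreted via η(1) = log 2. -/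
open Filter Finset Topology

/-- The `n`-th Pochhammer–Newton polynomial `P_n(α) = ((-1)^n / n!) ∏_{m=0}^{n-1} (α - m)`. -/
noncomputable def pochNewton (n : ℕ) (α : ℂ) : ℂ :=
  ((-1 : ℂ) ^ n / (n.factorial : ℂ)) * ∏ m ∈ Finset.range n, (α - (m : ℂ))

/-- Dirichlet eta values at the natural numbers: `η(k) = (1 - 2^{1-k}) ζ(k)` for `k ≠ 1`,
and `η(1) = log 2` (so `η(0) = 1/2`). -/
noncomputable def etaValue (k : ℕ) : ℂ :=
  if k = 1 then (Real.log 2 : ℂ) else (1 - (2 : ℂ) ^ (1 - (k : ℂ))) * riemannZeta k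

/-!
Let `η` be the Dirichlet eta function. Averaging consecutive partial sums of its Dirichlet series
gives `η(s) = 1/2 + 1/2 ∑_{m ≥ 1} (-1)^(m-1) (m^(-s) - (m+1)^(-s))`, which converges absolutely for
`Re s > 0` and, unlike the original series, is also correct at `s = 0`. So it is valid at every
interpolation point `k ∈ ℕ`.

Put `x_m = 1 - 1/m`. The binomial theorem gives `m^(-s) = (1 - x_m)^s = ∑_n P_n(s) x_m^n` for every
`s`, and its finite form shows that the `n`-th Newton coefficient of `s ↦ m^(-s)` is `x_m^n`.
Hence the theorem holds termwise, and it remains to interchange the sums over `m` and `n`. This is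
Fubini: for fixed `n` the differences `x_(m+1)^n - x_m^n` are nonnegative and telescope to at most
`1`, while `∑_n |P_n(s)| < ∞` for `Re s > 0` because `P_n(s) = O(n^(-Re s - 1))`.
-/

section PochNewton

lemma pochNewton_eq_neg_one_pow_mul_choose (n : ℕ) (s : ℂ) :
    pochNewton n s = (-1) ^ n * Ring.choose s n := by
  rw [Ring.choose_eq_smul, ← Polynomial.aeval_eq_smeval, Polynomial.aeval_def,
    Polynomial.eval₂_eq_eval_map, descPochhammer_map, descPochhammer_eval_eq_prod_range,
    pochNewton, smul_eq_mul]
  ring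

lemma pochNewton_natCast_eq_zero_of_lt {k n : ℕ} (h : k < n) : pochNewton n k = 0 := by
  rw [pochNewton, prod_eq_zero (mem_range.2 h) (sub_self _), mul_zero]

lemma sum_pochNewton_natCast_mul_pow (n : ℕ) (x : ℂ) :
    ∑ k ∈ range (n + 1), pochNewton k n * x ^ k = (1 - x) ^ n := by
  rw [sub_eq_neg_add, add_pow]
  refine sum_congr rfl fun k _ => ?_
  rw [pochNewton_eq_neg_one_pow_mul_choose, Ring.choose_natCast, neg_pow x, one_pow]
  ring

lemma hasSum_pochNewton_mul_pow (s : ℂ) {x : ℂ} (hx : ‖x‖ < 1) :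
    HasSum (fun n => pochNewton n s * x ^ n) ((1 - x) ^ s) := by
  have hmem : -x ∈ Metric.eball (0 : ℂ) 1 := by
    rw [mem_eball_zero_iff, enorm_neg, ← ENNReal.coe_one, enorm_lt_coe]
    exact_mod_cast hx
  have h := (Complex.one_add_cpow_hasFPowerSeriesOnBall_zero (a := s)).hasSum hmem
  rw [zero_add, ← sub_eq_add_neg] at h
  refine h.congr_fun fun n => ?_
  rw [pochNewton_eq_neg_one_pow_mul_choose, binomialSeries_apply, List.ofFn_const,
    List.prod_replicate, smul_eq_mul, neg_pow x]
  ring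

lemma pochNewton_succ_eq_inv_GammaSeq_mul (s : ℂ) {n : ℕ} (hn : n ≠ 0) :
    pochNewton (n + 1) s =
      (Complex.GammaSeq (-s) n)⁻¹ * ((n : ℂ) ^ (-s) / ((n + 1 : ℕ) : ℂ)) := by
  have hprod : ∏ j ∈ range (n + 1), (-s + (j : ℂ)) =
      (-1) ^ (n + 1) * ∏ j ∈ range (n + 1), (s - (j : ℂ)) := by
    rw [← card_range (n + 1), ← prod_const, card_range, ← prod_mul_distrib]
    exact prod_congr rfl fun j _ => by ring
  have hpow : (n : ℂ) ^ (-s) ≠ 0 := by simp [Complex.cpow_eq_zero_iff, hn]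
  have hfact : (n.factorial : ℂ) ≠ 0 := mod_cast n.factorial_ne_zero
  have hsucc : ((n + 1 : ℕ) : ℂ) ≠ 0 := mod_cast n.succ_ne_zero
  rw [Complex.GammaSeq, hprod, pochNewton, Nat.factorial_succ, Nat.cast_mul, inv_div]
  field_simp

/-- Away from `ℕ` this is Euler's limit for `1 / Γ(-s)`; on `ℕ` the sequence terminates. -/
lemma isBigO_pochNewton_succ (s : ℂ) :
    (fun n => pochNewton (n + 1) s) =O[atTop] fun n : ℕ => (n : ℝ) ^ (-s.re - 1) := by
  by_cases hs : ∃ k : ℕ, s = k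
  · obtain ⟨k, rfl⟩ := hs
    refine EventuallyEq.trans_isBigO ?_ (Asymptotics.isBigO_zero _ _)
    filter_upwards [eventually_ge_atTop k] with n hn
    exact pochNewton_natCast_eq_zero_of_lt (Nat.lt_succ_of_le hn)
  have hGamma : Complex.Gamma (-s) ≠ 0 :=
    Complex.Gamma_ne_zero fun k hk => hs ⟨k, neg_injective hk⟩
  have hinv := ((Complex.GammaSeq_tendsto_Gamma (-s)).inv₀ hGamma).isBigO_one ℝ
  have hquot : (fun n : ℕ => (n : ℂ) ^ (-s) / ((n + 1 : ℕ) : ℂ)) =O[atTop]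
      fun n : ℕ => (n : ℝ) ^ (-s.re - 1) := by
    refine Asymptotics.IsBigO.of_bound' ?_
    filter_upwards [eventually_gt_atTop 0] with n hn
    have hn' : (0 : ℝ) < n := mod_cast hn
    rw [norm_div, Complex.norm_natCast_cpow_of_pos hn, Complex.norm_natCast, Complex.neg_re,
      Real.norm_of_nonneg (by positivity), Real.rpow_sub_one hn'.ne']
    gcongr
    exact n.le_succ
  refine EventuallyEq.trans_isBigO ?_ ((hinv.mul hquot).congr_right fun n => one_mul _)
  filter_upwards [eventually_ne_atTop 0] with n hn
  exact pochNewton_succ_eq_inv_GammaSeq_mul s hn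

lemma summable_norm_pochNewton {s : ℂ} (hs : 0 < s.re) : Summable fun n => ‖pochNewton n s‖ :=
  (summable_nat_add_iff 1).1 <| summable_of_isBigO_nat
    (Real.summable_nat_rpow.2 (by linarith)) (isBigO_pochNewton_succ s).norm_left

end PochNewton

section CpowDiff

/-- The forward difference of `m ↦ (m + 1) ^ (-s)`. -/
noncomputable def cpowNegDiff (m : ℕ) (s : ℂ) : ℂ :=
  ((m + 2 : ℕ) : ℂ) ^ (-s) - ((m + 1 : ℕ) : ℂ) ^ (-s)

lemma cpowNegDiff_zero (m : ℕ) : cpowNegDiff m 0 = 0 := by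
  simp only [cpowNegDiff, neg_zero, Complex.cpow_zero, sub_self]

lemma differentiable_cpowNegDiff (m : ℕ) : Differentiable ℂ (cpowNegDiff m) := by
  have hpow (n : ℕ) : Differentiable ℂ fun s : ℂ => ((n + 1 : ℕ) : ℂ) ^ (-s) :=
    differentiable_id.neg.const_cpow (Or.inl (Nat.cast_ne_zero.2 n.succ_ne_zero))
  exact (hpow (m + 1)).sub (hpow m)

lemma norm_cpowNegDiff_le (m : ℕ) {s : ℂ} (hs : -1 ≤ s.re) :
    ‖cpowNegDiff m s‖ ≤ ‖s‖ * ((m + 1 : ℕ) : ℝ) ^ (-(s.re + 1)) := by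
  have hpos {x : ℝ} (hx : ((m + 1 : ℕ) : ℝ) ≤ x) : 0 < x := (Nat.cast_pos.2 m.succ_pos).trans_le hx
  have hderiv (x : ℝ) (hx : x ∈ Set.Icc ((m + 1 : ℕ) : ℝ) (m + 2 : ℕ)) :
      HasDerivWithinAt (fun x : ℝ => (x : ℂ) ^ (-s)) (-s * (x : ℂ) ^ (-s - 1))
        (Set.Icc ((m + 1 : ℕ) : ℝ) (m + 2 : ℕ)) x := by
    have h := (hasDerivAt_id (x : ℂ)).cpow_const (c := -s) (Or.inl (hpos hx.1))
    simpa using h.comp_ofReal.hasDerivWithinAt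
  have hbound (x : ℝ) (hx : x ∈ Set.Ico ((m + 1 : ℕ) : ℝ) (m + 2 : ℕ)) :
      ‖-s * (x : ℂ) ^ (-s - 1)‖ ≤ ‖s‖ * ((m + 1 : ℕ) : ℝ) ^ (-(s.re + 1)) := by
    rw [norm_mul, norm_neg, Complex.norm_cpow_eq_rpow_re_of_pos (hpos hx.1), Complex.sub_re,
      Complex.neg_re, Complex.one_re, ← neg_add']
    gcongr ‖s‖ * ?_
    exact Real.rpow_le_rpow_of_nonpos (hpos le_rfl) hx.1 (by linarith)
  have h := norm_image_sub_le_of_norm_deriv_le_segment' hderiv hbound (m + 2 : ℕ)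
    ⟨by gcongr; simp, le_rfl⟩
  have hlen : ((m + 2 : ℕ) : ℝ) - (m + 1 : ℕ) = 1 := by push_cast; ring
  rwa [hlen, mul_one, Complex.ofReal_natCast, Complex.ofReal_natCast] at h

lemma summable_natCast_succ_rpow {σ : ℝ} (hσ : 0 < σ) :
    Summable fun m : ℕ => ((m + 1 : ℕ) : ℝ) ^ (-(σ + 1)) :=
  (summable_nat_add_iff 1).2 (Real.summable_nat_rpow.2 (by linarith))

variable {c : ℕ → ℂ} {C : ℝ}

lemma norm_mul_cpowNegDiff_le (hc : ∀ m, ‖c m‖ ≤ C) {s : ℂ} {σ R : ℝ} (hσ : -1 ≤ σ)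
    (hσs : σ ≤ s.re) (hR : ‖s‖ ≤ R) (m : ℕ) :
    ‖c m * cpowNegDiff m s‖ ≤ C * (R * ((m + 1 : ℕ) : ℝ) ^ (-(σ + 1))) := by
  have hm : (1 : ℝ) ≤ (m + 1 : ℕ) := mod_cast m.succ_pos
  have hdiff : ‖cpowNegDiff m s‖ ≤ R * ((m + 1 : ℕ) : ℝ) ^ (-(σ + 1)) := by
    refine (norm_cpowNegDiff_le m (hσ.trans hσs)).trans ?_
    gcongr
    · exact (norm_nonneg s).trans hR
  rw [norm_mul]
  exact mul_le_mul (hc m) hdiff (norm_nonneg _) ((norm_nonneg _).trans (hc m))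

lemma summable_mul_cpowNegDiff (hc : ∀ m, ‖c m‖ ≤ C) {s : ℂ} (hs : 0 < s.re) :
    Summable fun m => c m * cpowNegDiff m s :=
  .of_norm_bounded (((summable_natCast_succ_rpow hs).mul_left ‖s‖).mul_left C)
    (norm_mul_cpowNegDiff_le hc (by linarith) le_rfl le_rfl)

lemma summable_mul_cpowNegDiff_natCast (hc : ∀ m, ‖c m‖ ≤ C) (k : ℕ) :
    Summable fun m => c m * cpowNegDiff m k := by
  obtain rfl | hk := k.eq_zero_or_pos
  · simpa only [Nat.cast_zero, cpowNegDiff_zero, mul_zero] using summable_zero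
  · exact summable_mul_cpowNegDiff hc (by simpa using hk)

lemma differentiableOn_tsum_mul_cpowNegDiff (hc : ∀ m, ‖c m‖ ≤ C) :
    DifferentiableOn ℂ (fun s => ∑' m, c m * cpowNegDiff m s) {s | 0 < s.re} := by
  intro s (hs : 0 < s.re)
  let U : Set ℂ := {z | s.re / 2 < z.re} ∩ Metric.ball 0 (‖s‖ + 1)
  have hU : IsOpen U :=
    (isOpen_lt continuous_const Complex.continuous_re).inter Metric.isOpen_ball
  have hsU : s ∈ U := ⟨half_lt_self hs, by simp⟩
  have hbound (m : ℕ) (w : ℂ) (hw : w ∈ U) := norm_mul_cpowNegDiff_le hc (by linarith) hw.1.le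
    (mem_ball_zero_iff.1 hw.2).le m
  have hdiff : DifferentiableOn ℂ (fun s => ∑' m, c m * cpowNegDiff m s) U :=
    Complex.differentiableOn_tsum_of_summable_norm
      (((summable_natCast_succ_rpow (half_pos hs)).mul_left (‖s‖ + 1)).mul_left C)
      (fun m => ((differentiable_cpowNegDiff m).const_mul (c m)).differentiableOn) hU hbound
  exact (hdiff.differentiableAt (hU.mem_nhds hsU)).differentiableWithinAt

end CpowDiff

section DirichletEta

/-- The Dirichlet eta function, the entire continuation of `∑ n ≥ 1, (-1) ^ (n - 1) n ^ (-s)`. It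
is encoded as the `L`-function of the `2`-periodic sequence `n ↦ (-1) ^ (n - 1)`. -/
noncomputable def dirichletEta : ℂ → ℂ :=
  ZMod.LFunction fun j : ZMod 2 => if j = 0 then -1 else 1

lemma sum_zmod_two {M : Type*} [AddCommMonoid M] (f : ZMod 2 → M) : ∑ j, f j = f 0 + f 1 :=
  Fin.sum_univ_two f

lemma differentiable_dirichletEta : Differentiable ℂ dirichletEta :=
  ZMod.differentiable_LFunction_of_sum_zero (by simp [sum_zmod_two])

lemma dirichletEta_of_ne_one {s : ℂ} (hs : s ≠ 1) :
    dirichletEta s = (1 - (2 : ℂ) ^ (1 - s)) * riemannZeta s := by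
  have htriv := DirichletCharacter.LFunctionTrivChar_eq_mul_riemannZeta (N := 2) hs
  have hpow : (2 : ℂ) ^ (1 - s) = 2 * 2 ^ (-s) := by
    rw [sub_eq_add_neg, Complex.cpow_add _ _ two_ne_zero, Complex.cpow_one]
  have hsplit : dirichletEta s =
      DirichletCharacter.LFunctionTrivChar 2 s - 2 ^ (-s) * riemannZeta s := by
    simp only [dirichletEta, DirichletCharacter.LFunctionTrivChar, DirichletCharacter.LFunction,
      ZMod.LFunction, sum_zmod_two, map_zero, HurwitzZeta.hurwitzZeta_zero, map_one, map_zero,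
      if_true, one_ne_zero, if_false, MulChar.map_zero, Nat.cast_two]
    ring
  rw [hsplit, htriv, Nat.prime_two.primeFactors, prod_singleton, hpow, Nat.cast_two]
  ring

lemma dirichletEta_one : dirichletEta 1 = Real.log 2 := by
  have hderiv : HasDerivAt (fun s : ℂ => 1 - (2 : ℂ) ^ (1 - s)) (Real.log 2 : ℂ) 1 := by
    have h := (((hasDerivAt_id (1 : ℂ)).const_sub 1).const_cpow (c := 2)
      (Or.inl two_ne_zero)).const_sub 1
    simpa using h
  have hlim := hderiv.tendsto_slope.mul riemannZeta_residue_one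
  rw [mul_one] at hlim
  refine tendsto_nhds_unique
    (differentiable_dirichletEta.continuous.continuousAt.tendsto.mono_left nhdsWithin_le_nhds)
    (hlim.congr' ?_)
  filter_upwards [self_mem_nhdsWithin] with s hs
  have hs' : s - 1 ≠ 0 := sub_ne_zero.2 hs
  simp only [dirichletEta_of_ne_one hs, slope_def_field, sub_self, Complex.cpow_zero]
  field_simp
  ring

lemma dirichletEta_zero : dirichletEta 0 = 1 / 2 := by
  rw [dirichletEta_of_ne_one zero_ne_one, riemannZeta_zero, sub_zero, Complex.cpow_one]
  norm_num

lemma etaValue_eq_dirichletEta (k : ℕ) : etaValue k = dirichletEta k := by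
  rw [etaValue]
  split_ifs with hk
  · rw [hk, Nat.cast_one, dirichletEta_one]
  · rw [dirichletEta_of_ne_one (Nat.cast_ne_one.2 hk)]

lemma hasSum_dirichletEta_of_one_lt_re {s : ℂ} (hs : 1 < s.re) :
    HasSum (fun m : ℕ => (-1) ^ m * ((m + 1 : ℕ) : ℂ) ^ (-s)) (dirichletEta s) := by
  have h := (ZMod.LSeriesSummable_of_one_lt_re
    (fun j : ZMod 2 => if j = 0 then (-1 : ℂ) else 1) hs).LSeriesHasSum
  rw [LSeriesHasSum, ← hasSum_nat_add_iff' 1, range_one, sum_singleton, LSeries.term_zero,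
    sub_zero] at h
  rw [dirichletEta, ZMod.LFunction_eq_LSeries _ hs]
  refine h.congr_fun fun m => ?_
  rw [LSeries.term_of_ne_zero m.succ_ne_zero, Complex.cpow_neg, div_eq_mul_inv]
  congr 1
  simp only [ZMod.natCast_eq_zero_iff_even, Nat.even_add_one]
  obtain hm | hm := m.even_or_odd
  · rw [if_neg (not_not_intro hm), hm.neg_one_pow]
  · rw [if_pos (Nat.not_even_iff_odd.2 hm), hm.neg_one_pow]

lemma norm_neg_one_pow_div_two_le (m : ℕ) : ‖-(-1 : ℂ) ^ m / 2‖ ≤ 1 / 2 := by simp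

lemma dirichletEta_eq_half_add_tsum_of_one_lt_re {s : ℂ} (hs : 1 < s.re) :
    dirichletEta s = 1 / 2 + ∑' m : ℕ, -(-1 : ℂ) ^ m / 2 * cpowNegDiff m s := by
  have h := hasSum_dirichletEta_of_one_lt_re hs
  have hshift := (hasSum_nat_add_iff' 1).2 h
  rw [range_one, sum_singleton, pow_zero, zero_add, Nat.cast_one, Complex.one_cpow, mul_one]
    at hshift
  have hsum := (h.add hshift).div_const 2
  rw [← sub_eq_iff_eq_add', eq_comm]
  convert hsum.tsum_eq using 1
  · exact tsum_congr fun m => by rw [cpowNegDiff, pow_succ]; ring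
  · ring

lemma dirichletEta_eq_half_add_tsum {s : ℂ} (hs : 0 < s.re) :
    dirichletEta s = 1 / 2 + ∑' m : ℕ, -(-1 : ℂ) ^ m / 2 * cpowNegDiff m s := by
  have hopen (a : ℝ) : IsOpen {s : ℂ | a < s.re} :=
    isOpen_lt continuous_const Complex.continuous_re
  have hseries := (differentiableOn_tsum_mul_cpowNegDiff norm_neg_one_pow_div_two_le).const_add
    (1 / 2)
  refine (differentiable_dirichletEta.differentiableOn.analyticOnNhd
    (hopen 0)).eqOn_of_preconnected_of_eventuallyEq (hseries.analyticOnNhd (hopen 0))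
    (convex_halfSpace_re_gt 0).isPreconnected (z₀ := 2) (by simp) ?_ hs
  filter_upwards [(hopen 1).mem_nhds (by simp : (2 : ℂ) ∈ {s : ℂ | 1 < s.re})] with z hz
  exact dirichletEta_eq_half_add_tsum_of_one_lt_re hz

lemma dirichletEta_natCast_eq_half_add_tsum (k : ℕ) :
    dirichletEta k = 1 / 2 + ∑' m : ℕ, -(-1 : ℂ) ^ m / 2 * cpowNegDiff m k := by
  obtain rfl | hk := k.eq_zero_or_pos
  · simp only [Nat.cast_zero, dirichletEta_zero, cpowNegDiff_zero, mul_zero, tsum_zero, add_zero]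
  · exact dirichletEta_eq_half_add_tsum (by simpa using hk)

end DirichletEta

section NewtonSeries

/-- The `n`-th coefficient of the Newton series of `f` with respect to the basis `pochNewton`, that
is, the binomial transform of the values of `f` on `ℕ`. -/
noncomputable def newtonCoeff (f : ℂ → ℂ) (n : ℕ) : ℂ :=
  ∑ k ∈ range (n + 1), pochNewton k n * f k

/-- `f` is represented at `s` by the Newton series interpolating it on `ℕ`, with unconditional
convergence. -/
def HasNewtonSeriesAt (f : ℂ → ℂ) (s : ℂ) : Prop :=
  HasSum (fun n => newtonCoeff f n * pochNewton n s) (f s)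

lemma HasNewtonSeriesAt.congr {f g : ℂ → ℂ} {s : ℂ} (hf : HasNewtonSeriesAt f s)
    (hnat : ∀ k : ℕ, g k = f k) (hs : g s = f s) : HasNewtonSeriesAt g s := by
  simpa only [HasNewtonSeriesAt, newtonCoeff, hnat, hs] using hf

lemma HasNewtonSeriesAt.add {f g : ℂ → ℂ} {s : ℂ} (hf : HasNewtonSeriesAt f s)
    (hg : HasNewtonSeriesAt g s) : HasNewtonSeriesAt (fun z => f z + g z) s := by
  refine (HasSum.add hf hg).congr_fun fun n => ?_
  simp only [newtonCoeff, mul_add, sum_add_distrib, add_mul]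

lemma newtonCoeff_const (a : ℂ) (n : ℕ) : newtonCoeff (fun _ => a) n = a * 0 ^ n := by
  have h := sum_pochNewton_natCast_mul_pow n 1
  simp only [one_pow, mul_one, sub_self] at h
  rw [newtonCoeff, ← sum_mul, h, mul_comm]

lemma hasNewtonSeriesAt_const (a s : ℂ) : HasNewtonSeriesAt (fun _ => a) s := by
  have h := (hasSum_pochNewton_mul_pow s (x := 0) (by simp)).mul_left a
  rw [sub_zero, Complex.one_cpow, mul_one] at h
  refine h.congr_fun fun n => ?_
  rw [newtonCoeff_const]
  ring

/-- The number `1 - 1 / (m + 1)`, chosen so that `(m + 1) ^ (-s) = (1 - oneSubInvSucc m) ^ s` has a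
binomial expansion in its powers. -/
noncomputable def oneSubInvSucc (m : ℕ) : ℝ := 1 - 1 / ((m : ℝ) + 1)

lemma oneSubInvSucc_zero : oneSubInvSucc 0 = 0 := by simp [oneSubInvSucc]

lemma oneSubInvSucc_mono : Monotone oneSubInvSucc := fun _ _ h =>
  sub_le_sub_left (Nat.one_div_le_one_div h) 1

lemma oneSubInvSucc_nonneg (m : ℕ) : 0 ≤ oneSubInvSucc m :=
  oneSubInvSucc_zero.symm.trans_le (oneSubInvSucc_mono m.zero_le)

lemma oneSubInvSucc_lt_one (m : ℕ) : oneSubInvSucc m < 1 := sub_lt_self 1 Nat.one_div_pos_of_nat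

lemma one_sub_oneSubInvSucc (m : ℕ) : 1 - (oneSubInvSucc m : ℂ) = ((m + 1 : ℕ) : ℂ)⁻¹ := by
  simp [oneSubInvSucc]

lemma tendsto_oneSubInvSucc : Tendsto oneSubInvSucc atTop (𝓝 1) := by
  simpa only [sub_zero] using! tendsto_one_div_add_atTop_nhds_zero_nat.const_sub (1 : ℝ)

lemma hasSum_pochNewton_mul_oneSubInvSucc_pow (s : ℂ) (m : ℕ) :
    HasSum (fun n => pochNewton n s * (oneSubInvSucc m : ℂ) ^ n) (((m + 1 : ℕ) : ℂ) ^ (-s)) := by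
  have hnorm : ‖(oneSubInvSucc m : ℂ)‖ < 1 := by
    rw [Complex.norm_of_nonneg (oneSubInvSucc_nonneg m)]
    exact oneSubInvSucc_lt_one m
  have harg : ((m + 1 : ℕ) : ℂ).arg ≠ Real.pi := by
    simpa only [Complex.natCast_arg] using Real.pi_ne_zero.symm
  have hpow : (1 - (oneSubInvSucc m : ℂ)) ^ s = ((m + 1 : ℕ) : ℂ) ^ (-s) := by
    rw [one_sub_oneSubInvSucc, Complex.inv_cpow _ _ harg, Complex.cpow_neg]
  exact hpow ▸ hasSum_pochNewton_mul_pow s hnorm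

lemma sum_pochNewton_natCast_mul_cpow (n m : ℕ) :
    ∑ k ∈ range (n + 1), pochNewton k n * ((m + 1 : ℕ) : ℂ) ^ (-(k : ℂ)) =
      (oneSubInvSucc m : ℂ) ^ n := by
  have h := sum_pochNewton_natCast_mul_pow n (1 - (oneSubInvSucc m : ℂ))
  rw [sub_sub_cancel] at h
  rw [← h]
  refine sum_congr rfl fun k _ => ?_
  rw [one_sub_oneSubInvSucc, Complex.cpow_neg, Complex.cpow_natCast, inv_pow]

/-- The `n`-th Newton coefficient of `cpowNegDiff m`, as a real number. -/
noncomputable def oneSubInvSuccPowDiff (n m : ℕ) : ℝ :=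
  oneSubInvSucc (m + 1) ^ n - oneSubInvSucc m ^ n

lemma oneSubInvSuccPowDiff_nonneg (n m : ℕ) : 0 ≤ oneSubInvSuccPowDiff n m :=
  sub_nonneg.2 (pow_le_pow_left₀ (oneSubInvSucc_nonneg m) (oneSubInvSucc_mono m.le_succ) n)

lemma hasSum_oneSubInvSuccPowDiff (n : ℕ) : HasSum (oneSubInvSuccPowDiff n) (1 - 0 ^ n) := by
  rw [hasSum_iff_tendsto_nat_of_nonneg (oneSubInvSuccPowDiff_nonneg n)]
  have htelescope (M : ℕ) :
      ∑ m ∈ range M, oneSubInvSuccPowDiff n m = oneSubInvSucc M ^ n - 0 ^ n := by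
    rw [← oneSubInvSucc_zero]
    exact sum_range_sub (fun m => oneSubInvSucc m ^ n) M
  simpa only [htelescope, one_pow] using (tendsto_oneSubInvSucc.pow n).sub_const (0 ^ n)

lemma newtonCoeff_cpowNegDiff (m n : ℕ) :
    newtonCoeff (cpowNegDiff m) n = oneSubInvSuccPowDiff n m := by
  simp only [newtonCoeff, cpowNegDiff, mul_sub, sum_sub_distrib,
    sum_pochNewton_natCast_mul_cpow n m, sum_pochNewton_natCast_mul_cpow n (m + 1),
    oneSubInvSuccPowDiff]
  push_cast
  rfl

lemma hasNewtonSeriesAt_cpowNegDiff (m : ℕ) (s : ℂ) : HasNewtonSeriesAt (cpowNegDiff m) s := by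
  refine ((hasSum_pochNewton_mul_oneSubInvSucc_pow s (m + 1)).sub
    (hasSum_pochNewton_mul_oneSubInvSucc_pow s m)).congr_fun fun n => ?_
  rw [newtonCoeff_cpowNegDiff, oneSubInvSuccPowDiff]
  push_cast
  ring

variable {c : ℕ → ℂ} {C : ℝ}

lemma newtonCoeff_tsum_mul_cpowNegDiff (hc : ∀ m, ‖c m‖ ≤ C) (n : ℕ) :
    newtonCoeff (fun s => ∑' m, c m * cpowNegDiff m s) n =
      ∑' m, c m * newtonCoeff (cpowNegDiff m) n := by
  simp only [newtonCoeff, ← tsum_mul_left, mul_sum]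
  rw [Summable.tsum_finsetSum fun k _ => ?_]
  · exact sum_congr rfl fun k _ => tsum_congr fun m => by ring
  · exact ((summable_mul_cpowNegDiff_natCast hc k).mul_left (pochNewton k n)).congr
      fun m => by ring

lemma summable_pochNewton_mul_oneSubInvSuccPowDiff {s : ℂ} (hs : 0 < s.re) :
    Summable fun p : ℕ × ℕ => ‖pochNewton p.1 s‖ * oneSubInvSuccPowDiff p.1 p.2 := by
  rw [summable_prod_of_nonneg fun p => mul_nonneg (norm_nonneg _) (oneSubInvSuccPowDiff_nonneg _ _)]
  refine ⟨fun n => (hasSum_oneSubInvSuccPowDiff n).summable.mul_left ‖pochNewton n s‖, ?_⟩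
  simp only [tsum_mul_left, (hasSum_oneSubInvSuccPowDiff _).tsum_eq]
  refine (summable_norm_pochNewton hs).of_nonneg_of_le (fun n => ?_) fun n => ?_
  · exact mul_nonneg (norm_nonneg _) (sub_nonneg.2 (pow_le_one₀ le_rfl zero_le_one))
  · exact mul_le_of_le_one_right (norm_nonneg _) (sub_le_self 1 (by positivity))

lemma hasNewtonSeriesAt_tsum_mul_cpowNegDiff (hc : ∀ m, ‖c m‖ ≤ C) {s : ℂ} (hs : 0 < s.re) :
    HasNewtonSeriesAt (fun z => ∑' m, c m * cpowNegDiff m z) s := by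
  let term (p : ℕ × ℕ) : ℂ := c p.2 * (newtonCoeff (cpowNegDiff p.2) p.1 * pochNewton p.1 s)
  have hterm : Summable term := by
    refine .of_norm_bounded ((summable_pochNewton_mul_oneSubInvSuccPowDiff hs).mul_left C)
      fun p => ?_
    rw [norm_mul, norm_mul, newtonCoeff_cpowNegDiff,
      Complex.norm_of_nonneg (oneSubInvSuccPowDiff_nonneg _ _), mul_comm (oneSubInvSuccPowDiff _ _)]
    exact mul_le_mul_of_nonneg_right (hc p.2)
      (mul_nonneg (norm_nonneg _) (oneSubInvSuccPowDiff_nonneg _ _))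
  have hrow (n : ℕ) : ∑' m, term (n, m) =
      newtonCoeff (fun z => ∑' m, c m * cpowNegDiff m z) n * pochNewton n s := by
    simp only [term, newtonCoeff_tsum_mul_cpowNegDiff hc, ← tsum_mul_right, mul_assoc]
  have hcol (m : ℕ) : ∑' n, term (n, m) = c m * cpowNegDiff m s :=
    ((hasNewtonSeriesAt_cpowNegDiff m s).mul_left (c m)).tsum_eq
  have hcomm : ∑' n, ∑' m, term (n, m) = ∑' m, ∑' n, term (n, m) :=
    (Summable.tsum_comm (f := fun n m => term (n, m)) hterm).symm
  have hsum := hterm.prod.hasSum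
  rw [hcomm] at hsum
  simpa only [HasNewtonSeriesAt, hrow, hcol] using hsum

end NewtonSeries

theorem hasNewtonSeriesAt_dirichletEta {s : ℂ} (hs : 0 < s.re) : HasNewtonSeriesAt dirichletEta s :=
  ((hasNewtonSeriesAt_const (1 / 2) s).add
    (hasNewtonSeriesAt_tsum_mul_cpowNegDiff norm_neg_one_pow_div_two_le hs)).congr
    dirichletEta_natCast_eq_half_add_tsum (dirichletEta_eq_half_add_tsum hs)

theorem newton_series_zeta_general {s : ℂ} (hs : 0 < s.re) :
    HasSum (fun n => (∑ k ∈ range (n + 1), pochNewton k n * etaValue k) * pochNewton n s)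
      (dirichletEta s) := by
  simpa only [etaValue_eq_dirichletEta] using! hasNewtonSeriesAt_dirichletEta hs

/-- Newton interpolation of the Riemann zeta function via the eta values: for `Re s > 0`,
`s ≠ 1`, `2^{1-s} ≠ 1`, the series `∑_{n} (∑_{k=0}^n P_k(n) η(k)) P_n(s)` converges
and `ζ(s) = (1 - 2^{1-s})⁻¹` times its sum. -/
theorem newton_series_zeta (s : ℂ) (hs : 0 < s.re) (hs1 : s ≠ 1)
    (hs2 : (2 : ℂ) ^ (1 - s) ≠ 1) :
    ∃ L : ℂ,
      Tendsto (fun N : ℕ => ∑ n ∈ Finset.range N,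
          (∑ k ∈ Finset.range (n + 1), pochNewton k (n : ℂ) * etaValue k) * pochNewton n s)
        atTop (𝓝 L) ∧
      riemannZeta s = (1 - (2 : ℂ) ^ (1 - s))⁻¹ * L := by
  refine ⟨dirichletEta s, (newton_series_zeta_general hs).tendsto_sum_nat, ?_⟩
  rw [dirichletEta_of_ne_one hs1, inv_mul_cancel_left₀ (sub_ne_zero.2 hs2.symm)]
end
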